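/- Fix N ≥ 1, q₀ ∈ ℝ, κ ≥ 0 and α > 0. Let A = {(u,v) ∈ ℝ^N × ℝ^N : Σ u_t = q₀, Σ v_t = q₀}, and define f₁(u,v) = Σ_{t=1}^N (κ u_t Σ_{j=1}^t (u_j + v_j) + α u_t²) and f₂(u,v) = Σ_{t=1}^N (κ v_t Σ_{j=1}^t (u_j + v_j) + α v_t²). Then the TWAP pair (c,c) with c_t = q₀/N is Pareto optimal: there is no (u,v) ∈ A with f₁(u,v) ≤ f₁(c,c) and f₂(u,v) ≤ f₂(c,c) and at least one inequality strict. -/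

import Mathlib

open Finset

/-- Agent 1's expected implementation shortfall in the two-agent Almgren–Chriss game
(`Σ_{j=1}^t` encoded by the sum over `j ∈ Iic t`). -/
noncomputable def cost₁ (N : ℕ) (κ α : ℝ) (u v : Fin N → ℝ) : ℝ :=
  ∑ t : Fin N, (κ * u t * (∑ j ∈ Iic t, (u j + v j)) + α * (u t) ^ 2)

/-- Agent 2's expected implementation shortfall in the two-agent Almgren–Chriss game. -/
noncomputable def cost₂ (N : ℕ) (κ α : ℝ) (u v : Fin N → ℝ) : ℝ :=
  ∑ t : Fin N, (κ * v t * (∑ j ∈ Iic t, (u j + v j)) + α * (v t) ^ 2)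

/-! In terms of the aggregate `u + v` and the difference `u - v`, the sum of the two costs is
`κ/2 (∑ (u + v))² + (κ + α)/2 ∑ (u + v)² + α/2 ∑ (u - v)²`.
Once the total inventory is given, the first term is fixed, the second is smallest when `u + v` is
constant, and the third vanishes when `u = v`. So TWAP minimizes the sum of the costs, and a
minimizer of the sum is Pareto optimal, that is, `MinimalFor` the pair of costs in the product
order. -/

theorem two_mul_sum_mul_sum_Iic {ι R : Type*} [Fintype ι] [LinearOrder ι]
    [LocallyFiniteOrderBot ι] [CommSemiring R] (w : ι → R) :
    2 * ∑ t, w t * ∑ j ∈ Iic t, w j = (∑ t, w t) ^ 2 + ∑ t, w t ^ 2 := by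
  have swap : ∑ t, w t * ∑ j ∈ Iic t, w j = ∑ t, w t * ∑ j with t ≤ j, w j := by
    simp only [mul_sum]
    rw [sum_comm' (t' := univ) (s' := fun j => univ.filter (j ≤ ·)) (by simp)]
    simp only [mul_comm]
  have split (t : ι) : ∑ j ∈ Iic t, w j + ∑ j with t ≤ j, w j = ∑ j, w j + w t := by
    have union : Iic t ∪ univ.filter (t ≤ ·) = univ := by ext j; simp [le_total]
    have inter : Iic t ∩ univ.filter (t ≤ ·) = {t} := by ext j; simp [le_antisymm_iff]
    rw [← sum_union_inter, union, inter, sum_singleton]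
  calc 2 * ∑ t, w t * ∑ j ∈ Iic t, w j
      = ∑ t, w t * (∑ j ∈ Iic t, w j + ∑ j with t ≤ j, w j) := by
        simp only [mul_add, sum_add_distrib, ← swap, two_mul]
    _ = (∑ t, w t) ^ 2 + ∑ t, w t ^ 2 := by
        simp only [split, mul_add, sum_add_distrib, ← sum_mul, sq]

theorem sum_const_sq_le_sum_sq {ι R : Type*} [CommRing R] [LinearOrder R] [IsStrictOrderedRing R]
    {s : Finset ι} {w : ι → R} {a : R} (h : ∑ i ∈ s, w i = ∑ _i ∈ s, a) :
    ∑ _i ∈ s, a ^ 2 ≤ ∑ i ∈ s, w i ^ 2 :=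
  calc ∑ _i ∈ s, a ^ 2 = ∑ i ∈ s, (2 * a * w i - a ^ 2) := by
        rw [sum_sub_distrib, ← mul_sum, h, mul_sum, ← sum_sub_distrib]
        exact sum_congr rfl fun _ _ => by ring
    _ ≤ ∑ i ∈ s, w i ^ 2 :=
        sum_le_sum fun i _ => sub_le_iff_le_add'.2 (two_mul_le_add_sq a (w i))

theorem minimalFor_prodMk_of_isMinOn_add {X M : Type*} [AddCommMonoid M] [Preorder M]
    [IsOrderedCancelAddMonoid M] {f g : X → M} {s : Set X} {x : X} (hx : x ∈ s)
    (h : IsMinOn (fun y => f y + g y) s x) :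
    MinimalFor (· ∈ s) (fun y => (f y, g y)) x := by
  refine ⟨hx, fun y hy ⟨hf, hg⟩ => ?_⟩
  have hfg : f x + g x ≤ f y + g y := h hy
  exact ⟨le_of_add_le_add_right (hfg.trans (add_le_add_right hg _)),
    le_of_add_le_add_left (hfg.trans (add_le_add_left hf _))⟩

theorem cost₁_add_cost₂ {N : ℕ} (κ α : ℝ) (u v : Fin N → ℝ) :
    cost₁ N κ α u v + cost₂ N κ α u v =
      κ / 2 * (∑ t, (u t + v t)) ^ 2 + (κ + α) / 2 * ∑ t, (u t + v t) ^ 2 +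
        α / 2 * ∑ t, (u t - v t) ^ 2 := by
  have impact := two_mul_sum_mul_sum_Iic fun t => u t + v t
  calc cost₁ N κ α u v + cost₂ N κ α u v
      = κ / 2 * (2 * ∑ t, (u t + v t) * ∑ j ∈ Iic t, (u j + v j)) +
          α / 2 * ∑ t, (u t + v t) ^ 2 + α / 2 * ∑ t, (u t - v t) ^ 2 := by
        simp only [cost₁, cost₂, mul_sum (s := univ), ← sum_add_distrib (s := univ)]
        exact sum_congr rfl fun t _ => by ring
    _ = _ := by rw [impact]; ring

theorem cost₁_add_cost₂_const_le {N : ℕ} {κ α a : ℝ} (hα : 0 ≤ α) (hκα : 0 ≤ κ + α)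
    {u v : Fin N → ℝ} (h : ∑ t, (u t + v t) = ∑ _t : Fin N, (a + a)) :
    cost₁ N κ α (fun _ => a) (fun _ => a) + cost₂ N κ α (fun _ => a) (fun _ => a) ≤
      cost₁ N κ α u v + cost₂ N κ α u v := by
  have aggregate : ∑ _t : Fin N, (a + a) ^ 2 ≤ ∑ t, (u t + v t) ^ 2 := sum_const_sq_le_sum_sq h
  have difference : ∑ _t : Fin N, (a - a) ^ 2 ≤ ∑ t, (u t - v t) ^ 2 :=
    sum_le_sum fun t _ => by simpa using sq_nonneg (u t - v t)
  rw [cost₁_add_cost₂, cost₁_add_cost₂, h]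
  gcongr

theorem twap_pareto_optimal_general {N : ℕ} (hN : 1 ≤ N) {q₀ κ α : ℝ}
    (hα : 0 ≤ α) (hκα : 0 ≤ κ + α) {c : Fin N → ℝ} (hc : ∀ t, c t = q₀ / N) :
    MinimalFor (· ∈ {p : (Fin N → ℝ) × (Fin N → ℝ) | ∑ t, (p.1 t + p.2 t) = 2 * q₀})
      (fun p => (cost₁ N κ α p.1 p.2, cost₂ N κ α p.1 p.2)) (c, c) := by
  obtain rfl : c = fun _ => q₀ / N := funext hc
  have twap_inventory : ∑ _t : Fin N, (q₀ / N + q₀ / N) = 2 * q₀ := by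
    have : (N : ℝ) ≠ 0 := Nat.cast_ne_zero.2 (Nat.one_le_iff_ne_zero.1 hN)
    rw [sum_const, card_fin, nsmul_eq_mul]
    field_simp
    ring
  exact minimalFor_prodMk_of_isMinOn_add twap_inventory fun p hp =>
    cost₁_add_cost₂_const_le hα hκα (hp.trans twap_inventory.symm)

/-- **The TWAP pair is a (collusive) Pareto optimum.** Fix `N ≥ 1`, `q₀ ∈ ℝ`, `κ ≥ 0`,
`α > 0`, and let `c_t = q₀/N`. There is no admissible pair `(u,v)` (with
`Σ u_t = q₀` and `Σ v_t = q₀`) such that `f₁(u,v) ≤ f₁(c,c)`, `f₂(u,v) ≤ f₂(c,c)`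
and at least one of the two inequalities is strict. -/
theorem twap_pareto_optimal (N : ℕ) (hN : 1 ≤ N) (q₀ κ α : ℝ)
    (hκ : 0 ≤ κ) (hα : 0 < α)
    (c : Fin N → ℝ) (hc : ∀ t, c t = q₀ / N) :
    ¬ ∃ u v : Fin N → ℝ, (∑ t, u t) = q₀ ∧ (∑ t, v t) = q₀ ∧
        cost₁ N κ α u v ≤ cost₁ N κ α c c ∧
        cost₂ N κ α u v ≤ cost₂ N κ α c c ∧
        (cost₁ N κ α u v < cost₁ N κ α c c ∨ cost₂ N κ α u v < cost₂ N κ α c c) := by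
  rintro ⟨u, v, hu, hv, h₁, h₂, hlt⟩
  exact (twap_pareto_optimal_general hN hα.le (add_nonneg hκ hα.le) hc).not_lt
    (j := (u, v)) (by simp [sum_add_distrib, hu, hv, two_mul])
    (Prod.lt_iff.2 (hlt.imp (⟨·, h₂⟩) (⟨h₁, ·⟩)))
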